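/- With the construction of the previous statement, the image of the cluster representation can be taken inside {0, 1, ..., ⌊(1+√2)^n / 4⌋}: every cluster tree on an n-element set has a cluster representation f : X → {0, ..., ⌊(1+√2)^n / 4⌋} ⊆ ℤ with Euclidean distance. -/

import Mathlib

/-- Bound on the diameters of the blocks. -/
def dSeq : ℕ → ℤ
  | 0 => 0
  | 1 => 1
  | (k + 2) => 2 * dSeq (k + 1) + dSeq k + 1

theorem dSeq_succ (k : ℕ) : dSeq (k + 1) = 2 * dSeq k + dSeq (k - 1) + 1 := by
  cases k with
  | zero => simp [dSeq]
  | succ k => simp [dSeq]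

theorem dSeq_nonneg (k : ℕ) : 0 ≤ dSeq k ∧ 0 ≤ dSeq (k + 1) := by
  induction k with
  | zero => simp [dSeq]
  | succ k ih => refine ⟨ih.2, ?_⟩; simp only [dSeq]; omega

theorem dSeq_mono : Monotone dSeq := by
  apply monotone_nat_of_le_succ
  intro k
  rw [dSeq_succ]
  have := (dSeq_nonneg k).1
  have := (dSeq_nonneg (k - 1)).1
  omega

theorem dSeq_formula (k : ℕ) :
    ((dSeq k : ℝ) + 1 / 2 = ((1 + Real.sqrt 2) ^ (k + 1) + (1 - Real.sqrt 2) ^ (k + 1)) / 4) ∧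
    ((dSeq (k + 1) : ℝ) + 1 / 2 =
      ((1 + Real.sqrt 2) ^ (k + 2) + (1 - Real.sqrt 2) ^ (k + 2)) / 4) := by
  have h2 : Real.sqrt 2 ^ 2 = 2 := Real.sq_sqrt (by norm_num)
  induction k with
  | zero =>
    constructor
    · simp [dSeq]; ring
    · simp [dSeq]; ring_nf; rw [h2]; norm_num
  | succ k ih =>
    refine ⟨ih.2, ?_⟩
    have e1 : (1 + Real.sqrt 2) ^ (k + 1 + 2)
        = 2 * (1 + Real.sqrt 2) ^ (k + 2) + (1 + Real.sqrt 2) ^ (k + 1) := by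
      have : (1 + Real.sqrt 2) ^ 2 = 2 * (1 + Real.sqrt 2) + 1 := by ring_nf; rw [h2]; ring
      rw [pow_add _ (k + 1) 2, this]; ring
    have e2 : (1 - Real.sqrt 2) ^ (k + 1 + 2)
        = 2 * (1 - Real.sqrt 2) ^ (k + 2) + (1 - Real.sqrt 2) ^ (k + 1) := by
      have : (1 - Real.sqrt 2) ^ 2 = 2 * (1 - Real.sqrt 2) + 1 := by ring_nf; rw [h2]; ring
      rw [pow_add _ (k + 1) 2, this]; ring
    rw [e1, e2]
    simp only [dSeq]
    push_cast
    linarith [ih.1, ih.2]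

theorem dSeq_le_floor (k : ℕ) : dSeq k ≤ ⌊((1 + Real.sqrt 2) ^ (k + 1) / 4 : ℝ)⌋ := by
  rw [Int.le_floor]
  have h := (dSeq_formula k).1
  have h1 : |1 - Real.sqrt 2| ≤ 1 := by
    rw [abs_le]
    have h2 : Real.sqrt 2 ≤ 2 := by
      rw [Real.sqrt_le_left (by norm_num)]; norm_num
    constructor <;> linarith [Real.sqrt_nonneg 2]
  have h3 : |(1 - Real.sqrt 2) ^ (k + 1)| ≤ 1 := by
    rw [abs_pow]; exact pow_le_one₀ (abs_nonneg _) h1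
  linarith [(abs_le.mp h3).2]

/-- Being in the same block of a family of sets. -/
def SameBlk {X : Type*} (Q : Finset (Finset X)) (x y : X) : Prop :=
  ∃ C ∈ Q, x ∈ C ∧ y ∈ C

theorem clusterStep {X : Type*} [DecidableEq X] (k : ℕ) (R : ℕ → X → X → Prop) (A B : Finset X)
    (hAne : A.Nonempty)
    (hdisj : ∀ x ∈ A, x ∉ B)
    (hA : ∀ x ∈ A, ∀ y, R k x y ↔ y ∈ A)
    (hB : ∀ x ∈ B, ∀ y, R k x y ↔ y ∈ B)
    (hsymm : ∀ x y, R k x y → R k y x)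
    (hmono : ∀ j ≤ k, ∀ x y, R j x y → R k x y)
    (hR : ∀ x y, R (k + 1) x y ↔ R k x y ∨ (x ∈ A ∧ y ∈ B) ∨ (x ∈ B ∧ y ∈ A))
    (f : X → ℤ) (h0 : ∀ x, 0 ≤ f x ∧ f x ≤ dSeq k)
    (hs : ∀ x y, ¬ R k x y → f x + f y ≤ dSeq k + dSeq (k - 1))
    (hf : ∀ j ≤ k, ∀ x y, R k x y → (R j x y → |f x - f y| ≤ dSeq j) ∧
      (¬ R j x y → dSeq j < |f x - f y|)) :
    ∃ f : X → ℤ, (∀ x, 0 ≤ f x ∧ f x ≤ dSeq (k + 1)) ∧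
    (∀ x y, ¬ R (k + 1) x y → f x + f y ≤ dSeq (k + 1) + dSeq k) ∧
    (∀ j ≤ k + 1, ∀ x y, R (k + 1) x y → (R j x y → |f x - f y| ≤ dSeq j) ∧
      (¬ R j x y → dSeq j < |f x - f y|)) := by
  obtain ⟨m, hmA, hm⟩ := A.exists_max_image f hAne
  have hd := dSeq_succ k
  have hk := (dSeq_nonneg k).1
  have hk1 := (dSeq_nonneg (k - 1)).1
  let g : X → ℤ := fun x => if x ∈ B then f x + f m + dSeq k + 1 else f x
  have gB : ∀ x ∈ B, g x = f x + f m + dSeq k + 1 := fun x hx => by simp [g, hx]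
  have gN : ∀ x, x ∉ B → g x = f x := fun x hx => by simp [g, hx]
  have hBk : ∀ x ∈ B, f m + f x ≤ dSeq k + dSeq (k - 1) := fun x hx =>
    hs m x (fun h => hdisj x ((hA m hmA x).1 h) hx)
  have hg0 : ∀ x, 0 ≤ g x ∧ g x ≤ dSeq (k + 1) := by
    intro x
    have := h0 x
    have := h0 m
    by_cases hx : x ∈ B
    · have := hBk x hx
      rw [gB x hx]; omega
    · rw [gN x hx]; omega
  have hcross : ∀ x ∈ A, ∀ y ∈ B, dSeq k < g y - g x := by
    intro x hx y hy
    rw [gB y hy, gN x (hdisj x hx)]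
    have := hm x hx
    have := h0 y
    omega
  refine ⟨g, hg0, ?_, ?_⟩
  · intro x y hxy
    rw [hR] at hxy
    push Not at hxy
    by_cases hx : x ∈ B
    · have hy : y ∉ B := fun hy => hxy.1 ((hB x hx y).2 hy)
      have := (hg0 x).2
      have := (h0 y).2
      rw [gN y hy]; omega
    · have := (hg0 y).2
      have := (h0 x).2
      rw [gN x hx]; omega
  · intro j hj x y hxy
    have hrange : |g x - g y| ≤ dSeq (k + 1) := by
      have := hg0 x
      have := hg0 y
      rw [abs_le]; omega
    rcases Nat.lt_or_ge k j with hkj | hkj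
    · have : j = k + 1 := by omega
      subst this
      exact ⟨fun _ => hrange, fun h => absurd hxy h⟩
    · have hdj := dSeq_mono hkj
      rcases (hR x y).1 hxy with h | ⟨hx, hy⟩ | ⟨hx, hy⟩
      · have e : g x - g y = f x - f y := by
          by_cases hx : x ∈ B
          · rw [gB x hx, gB y ((hB x hx y).1 h)]; ring
          · have hy : y ∉ B := fun hy => hx ((hB y hy x).1 (hsymm _ _ h))
            rw [gN x hx, gN y hy]
        rw [e]
        exact hf j hkj x y h
      · have := hcross x hx y hy
        refine ⟨fun h => absurd hy (hdisj y ((hA x hx y).1 (hmono j hkj x y h))), fun _ => ?_⟩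
        rw [lt_abs]; omega
      · have := hcross y hy x hx
        refine ⟨fun h => absurd ((hB x hx y).1 (hmono j hkj x y h)) (hdisj y hy), fun _ => ?_⟩
        rw [lt_abs]; omega


/-- Every cluster tree on an `n`-element set has a cluster representation
`f : X → {0, …, ⌊(1+√2)^n / 4⌋} ⊆ ℤ`. -/
theorem stmt_19 {X : Type*} [Fintype X] [DecidableEq X]
    (n : ℕ) (hn : n = Fintype.card X) (hn1 : 1 ≤ n)
    (P : ℕ → Finset (Finset X))
    (hcover : ∀ k, k < n → ∀ x : X, ∃! C, C ∈ P k ∧ x ∈ C)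
    (hne : ∀ k, k < n → ∀ C ∈ P k, C.Nonempty)
    (hdisc : P 0 = Finset.univ.image (fun x : X => ({x} : Finset X)))
    (hlast : P (n - 1) = {Finset.univ})
    (hmerge : ∀ k, k + 1 < n → ∃ A ∈ P k, ∃ B ∈ P k, A ≠ B ∧
      P (k + 1) = insert (A ∪ B) (((P k).erase A).erase B)) :
    ∃ f : X → ℤ, Function.Injective f ∧
      (∀ x : X, 0 ≤ f x ∧ f x ≤ ⌊((1 + Real.sqrt 2) ^ n / 4 : ℝ)⌋) ∧
      ∀ k, k + 1 < n → ∀ A ∈ P k, ∀ B ∈ P k, A ≠ B →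
        P (k + 1) = insert (A ∪ B) (((P k).erase A).erase B) →
        ∀ a ∈ A, ∀ b ∈ B,
          (∀ C ∈ P k, ∀ x ∈ C, ∀ y ∈ C, x ≠ y → |f x - f y| < |f a - f b|) ∧
          (∀ C ∈ P k, ∀ D ∈ P k, C ≠ D →
            ({C, D} : Set (Finset X)) ≠ {A, B} →
            ∀ x ∈ C, ∀ y ∈ D, |f a - f b| < |f x - f y|) := by
  have huniq : ∀ k, k < n → ∀ C ∈ P k, ∀ D ∈ P k, ∀ x, x ∈ C → x ∈ D → C = D := by
    intro k hk C hC D hD x hxC hxD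
    exact (hcover k hk x).unique ⟨hC, hxC⟩ ⟨hD, hxD⟩
  have hblk : ∀ k, k < n → ∀ C ∈ P k, ∀ x ∈ C, ∀ y, SameBlk (P k) x y ↔ y ∈ C := by
    intro k hk C hC x hx y
    constructor
    · rintro ⟨D, hD, hxD, hyD⟩
      rwa [huniq k hk C hC D hD x hx hxD]
    · intro hy
      exact ⟨C, hC, hx, hy⟩
  have hstepR : ∀ k, k + 1 < n → ∀ A ∈ P k, ∀ B ∈ P k,
      P (k + 1) = insert (A ∪ B) (((P k).erase A).erase B) → ∀ x y,
      (SameBlk (P (k + 1)) x y ↔ SameBlk (P k) x y ∨ (x ∈ A ∧ y ∈ B) ∨ (x ∈ B ∧ y ∈ A)) := by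
    intro k hk A hA B hB hP x y
    constructor
    · rintro ⟨C, hC, hx, hy⟩
      rw [hP, Finset.mem_insert, Finset.mem_erase, Finset.mem_erase] at hC
      rcases hC with rfl | ⟨_, _, hC⟩
      · rcases Finset.mem_union.1 hx with hx | hx <;> rcases Finset.mem_union.1 hy with hy | hy
        · exact Or.inl ⟨A, hA, hx, hy⟩
        · exact Or.inr (Or.inl ⟨hx, hy⟩)
        · exact Or.inr (Or.inr ⟨hx, hy⟩)
        · exact Or.inl ⟨B, hB, hx, hy⟩
      · exact Or.inl ⟨C, hC, hx, hy⟩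
    · have hAB : A ∪ B ∈ P (k + 1) := by rw [hP]; exact Finset.mem_insert_self _ _
      rintro (⟨C, hC, hx, hy⟩ | ⟨hx, hy⟩ | ⟨hx, hy⟩)
      · by_cases hCA : C = A
        · subst hCA
          exact ⟨_, hAB, Finset.mem_union_left _ hx, Finset.mem_union_left _ hy⟩
        · by_cases hCB : C = B
          · subst hCB
            exact ⟨_, hAB, Finset.mem_union_right _ hx, Finset.mem_union_right _ hy⟩
          · refine ⟨C, ?_, hx, hy⟩
            rw [hP]
            simp [hCA, hCB, hC]
      · exact ⟨_, hAB, Finset.mem_union_left _ hx, Finset.mem_union_right _ hy⟩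
      · exact ⟨_, hAB, Finset.mem_union_right _ hx, Finset.mem_union_left _ hy⟩
  have hR0 : ∀ x y, SameBlk (P 0) x y ↔ x = y := by
    intro x y
    rw [hdisc]
    simp [SameBlk, eq_comm]
  have hmono : ∀ k, k < n → ∀ j ≤ k, ∀ x y, SameBlk (P j) x y → SameBlk (P k) x y := by
    intro k
    induction k with
    | zero => intro _ j hj x y h; obtain rfl : j = 0 := by omega
              exact h
    | succ k ih =>
      intro hk j hj x y h
      rcases Nat.lt_or_ge k j with hkj | hkj
      · obtain rfl : j = k + 1 := by omega
        exact h
      · obtain ⟨A, hA, B, hB, _, hP⟩ := hmerge k hk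
        exact (hstepR k hk A hA B hB hP x y).2 (Or.inl (ih (by omega) j hkj x y h))
  have main : ∀ k, k < n → ∃ f : X → ℤ, (∀ x, 0 ≤ f x ∧ f x ≤ dSeq k) ∧
      (∀ x y, ¬ SameBlk (P k) x y → f x + f y ≤ dSeq k + dSeq (k - 1)) ∧
      (∀ j ≤ k, ∀ x y, SameBlk (P k) x y → (SameBlk (P j) x y → |f x - f y| ≤ dSeq j) ∧
        (¬ SameBlk (P j) x y → dSeq j < |f x - f y|)) := by
    intro k
    induction k with
    | zero =>
      intro _
      refine ⟨fun _ => 0, by simp [dSeq], by simp [dSeq], ?_⟩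
      intro j hj x y h
      obtain rfl : j = 0 := by omega
      exact ⟨fun _ => by simp [dSeq], fun h' => absurd h h'⟩
    | succ k ih =>
      intro hk
      obtain ⟨f, h0, hs, hf⟩ := ih (by omega)
      obtain ⟨A, hA, B, hB, hne', hP⟩ := hmerge k hk
      have hk' : k < n := by omega
      exact clusterStep k (fun j => SameBlk (P j)) A B (hne k hk' A hA)
        (fun x hx hx' => hne' (huniq k hk' A hA B hB x hx hx'))
        (hblk k hk' A hA) (hblk k hk' B hB)
        (fun x y ⟨C, hC, hx, hy⟩ => ⟨C, hC, hy, hx⟩)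
        (hmono k hk') (hstepR k hk A hA B hB hP) f h0 hs hf
  obtain ⟨f, h0, -, hf⟩ := main (n - 1) (by omega)
  have hall : ∀ x y, SameBlk (P (n - 1)) x y := by
    intro x y
    rw [hlast]
    exact ⟨Finset.univ, by simp, by simp, by simp⟩
  refine ⟨f, ?_, ?_, ?_⟩
  · intro x y hxy
    by_contra hne'
    have := (hf 0 (by omega) x y (hall x y)).2 (fun h => hne' ((hR0 x y).1 h))
    simp [hxy, dSeq] at this
  · intro x
    refine ⟨(h0 x).1, (h0 x).2.trans ?_⟩
    have := dSeq_le_floor (n - 1)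
    rwa [Nat.sub_add_cancel hn1] at this
  · intro k hk A hA B hB hAB hP a ha b hb
    have hk' : k < n := by omega
    have hlo : dSeq k < |f a - f b| := by
      refine (hf k (by omega) a b (hall a b)).2 ?_
      rw [hblk k hk' A hA a ha]
      exact fun h => hAB (huniq k hk' A hA B hB b h hb)
    have hhi : |f a - f b| ≤ dSeq (k + 1) :=
      (hf (k + 1) (by omega) a b (hall a b)).1
        ((hstepR k hk A hA B hB hP a b).2 (Or.inr (Or.inl ⟨ha, hb⟩)))
    constructor
    · intro C hC x hx y hy _
      exact ((hf k (by omega) x y (hall x y)).1 ⟨C, hC, hx, hy⟩).trans_lt hlo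
    · intro C hC D hD hCD hset x hx y hy
      refine hhi.trans_lt ((hf (k + 1) (by omega) x y (hall x y)).2 ?_)
      rw [hstepR k hk A hA B hB hP x y]
      rintro (h | ⟨h1, h2⟩ | ⟨h1, h2⟩)
      · exact hCD (huniq k hk' C hC D hD y ((hblk k hk' C hC x hx y).1 h) hy)
      · apply hset
        rw [huniq k hk' C hC A hA x hx h1, huniq k hk' D hD B hB y hy h2]
      · apply hset
        rw [huniq k hk' C hC B hB x hx h1, huniq k hk' D hD A hA y hy h2]
        exact Set.pair_comm _ _
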